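/- arXiv:1703.10681 — 3 statements merged into one kernel-verified Lean document; each statement's English description precedes it below -/
import Mathlib

section
/- Fix γ ∈ (0,1]. Compute the greedy order a_1, …, a_n with respect to the true costs c, and suppose k ∈ {1, …, n} satisfies c_{a_k} · v(S_k) > γ · B · m_{a_k}(S_{k−1}). Then (1 + 1/γ) · v(S_{k−1}) + (1/γ) · v({i*}) ≥ opt(A, B). -/
open Classical

/-- Marginal value `m_i(S) = v(S ∪ {i}) - v(S)`. -/
noncomputable def marg {ι : Type*} [DecidableEq ι] (v : Finset ι → ℝ) (S : Finset ι) (i : ι) : ℝ :=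
  v (insert i S) - v S

/-- The next agent in the greedy order once the set `S` has been selected:
an agent of `Sᶜ` maximizing marginal value over bid, ties broken by the fixed linear order. -/
noncomputable def pick {ι : Type*} [Fintype ι] [LinearOrder ι] [Nonempty ι]
    (v : Finset ι → ℝ) (b : ι → ℝ) (S : Finset ι) : ι :=
  if h : Sᶜ.Nonempty then
    (Sᶜ.filter fun j => ∀ j' ∈ Sᶜ, marg v S j' / b j' ≤ marg v S j / b j).min'
      (by
        obtain ⟨j, hj, hmax⟩ := Finset.exists_max_image Sᶜ (fun j => marg v S j / b j) h
        exact ⟨j, Finset.mem_filter.mpr ⟨hj, hmax⟩⟩)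
  else Classical.arbitrary ι

/-- `greedySet v b t` is the set `S_t` of the first `t` agents in the greedy order
computed with respect to the bid vector `b`. -/
noncomputable def greedySet {ι : Type*} [Fintype ι] [LinearOrder ι] [Nonempty ι]
    (v : Finset ι → ℝ) (b : ι → ℝ) : ℕ → Finset ι
  | 0 => ∅
  | t + 1 => insert (pick v b (greedySet v b t)) (greedySet v b t)

/-- `agent v b k` is the `k`-th agent `a_k` in the greedy order (1-indexed). -/
noncomputable def agent {ι : Type*} [Fintype ι] [LinearOrder ι] [Nonempty ι]
    (v : Finset ι → ℝ) (b : ι → ℝ) (k : ℕ) : ι :=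
  pick v b (greedySet v b (k - 1))

/-- `optVal v b B A'` is the maximum of `v S` over `S ⊆ A'` with `∑_{i ∈ S} b i ≤ B`. -/
noncomputable def optVal {ι : Type*} (v : Finset ι → ℝ) (b : ι → ℝ) (B : ℝ)
    (A' : Finset ι) : ℝ :=
  sSup (v '' {S : Finset ι | S ⊆ A' ∧ ∑ i ∈ S, b i ≤ B})

/-- The greedy threshold mechanism `Greedy-TM(γ, b)`: it outputs `S_{k-1}` where `k` is the
least index with `b_{a_k} · v(S_k) > γ · B · m_{a_k}(S_{k-1})`, and all of `A` if no such `k`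
exists. -/
noncomputable def greedyTM {ι : Type*} [Fintype ι] [LinearOrder ι] [Nonempty ι]
    (v : Finset ι → ℝ) (B γ : ℝ) (b : ι → ℝ) : Finset ι :=
  if h : ∃ k, (1 ≤ k ∧ k ≤ Fintype.card ι) ∧
      b (agent v b k) * v (greedySet v b k) >
        γ * B * marg v (greedySet v b (k - 1)) (agent v b k)
  then greedySet v b (Nat.find h - 1)
  else Finset.univ

/-- The exponential-time greedy oracle mechanism `Greedy-EOM(α, b)`: it outputs `S_{k-1}` where
`k` is the least index with `v(S_k) > α · opt_b(A, B)`, and all of `A` if no such `k` exists. -/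
noncomputable def greedyEOM {ι : Type*} [Fintype ι] [LinearOrder ι] [Nonempty ι]
    (v : Finset ι → ℝ) (B α : ℝ) (b : ι → ℝ) : Finset ι :=
  if h : ∃ k, (1 ≤ k ∧ k ≤ Fintype.card ι) ∧
      v (greedySet v b k) > α * optVal v b B Finset.univ
  then greedySet v b (Nat.find h - 1)
  else Finset.univ

/-- The greedy oracle mechanism `Greedy-OM(α, b)` with oracle `O`: it outputs
`{ a_t : 1 ≤ t ≤ n, v(S_t) ≤ α · O(b, A \ {a_t}) }`. -/
noncomputable def greedyOM {ι : Type*} [Fintype ι] [LinearOrder ι] [Nonempty ι]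
    (v : Finset ι → ℝ) (O : (ι → ℝ) → Finset ι → ℝ) (α : ℝ) (b : ι → ℝ) : Finset ι :=
  ((Finset.Icc 1 (Fintype.card ι)).filter
      (fun t => v (greedySet v b t) ≤ α * O b (Finset.univ.erase (agent v b t)))).image
    (fun t => agent v b t)

/-- An allocation rule `f`, mapping bid vectors with positive entries to subsets of the agents,
is monotone if a winner remains a winner after lowering his bid. -/
def MonotoneAlloc {ι : Type*} [DecidableEq ι] (f : (ι → ℝ) → Finset ι) : Prop :=
  ∀ b : ι → ℝ, (∀ j, 0 < b j) → ∀ i ∈ f b, ∀ β : ℝ, 0 < β → β ≤ b i →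
    i ∈ f (Function.update b i β)

/-!
Submodularity bounds the value of a budget-feasible set `T` by `v(S)` plus the marginal values over
`S` of the members of `T`. Each marginal value is at most the cost times the density
`m_a(S) / c_a` of the next greedy agent `a`, so `opt ≤ v(S) + B · m_a(S) / c_a`.
For `S = S_{k-1}` and `a = a_k` the threshold condition bounds the last term by `v(S_k) / γ`, and
`v(S_k) ≤ v(S_{k-1}) + v({a_k})` by subadditivity.
-/

section Valuation

variable {ι : Type*} [DecidableEq ι] {v : Finset ι → ℝ} {S T : Finset ι} {i : ι}

lemma marg_eq_zero_of_mem (hi : i ∈ S) : marg v S i = 0 := by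
  rw [marg, Finset.insert_eq_of_mem hi, sub_self]

lemma marg_nonneg (hvmono : Monotone v) (S : Finset ι) (i : ι) : 0 ≤ marg v S i :=
  sub_nonneg.mpr (hvmono (Finset.subset_insert i S))

lemma marg_le_marg_of_subset
    (hvsub : ∀ S T : Finset ι, v (S ∪ T) + v (S ∩ T) ≤ v S + v T)
    (hST : S ⊆ T) (hi : i ∉ T) : marg v T i ≤ marg v S i := by
  have hunion : insert i S ∪ T = insert i T := by
    rw [Finset.insert_union, Finset.union_eq_right.mpr hST]
  have hinter : insert i S ∩ T = S := by
    rw [Finset.insert_inter_of_notMem hi, Finset.inter_eq_left.mpr hST]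
  have hsub := hvsub (insert i S) T
  rw [hunion, hinter] at hsub
  unfold marg
  linarith

lemma apply_union_le_add_sum_marg
    (hvsub : ∀ S T : Finset ι, v (S ∪ T) + v (S ∩ T) ≤ v S + v T)
    (S T : Finset ι) : v (S ∪ T) ≤ v S + ∑ j ∈ T, marg v S j := by
  induction T using Finset.induction_on with
  | empty => simp
  | insert j T hjT ih =>
    have hmarg : marg v (S ∪ T) j ≤ marg v S j := by
      by_cases hjS : j ∈ S
      · rw [marg_eq_zero_of_mem hjS, marg_eq_zero_of_mem (Finset.mem_union_left T hjS)]
      · exact marg_le_marg_of_subset hvsub Finset.subset_union_left (by simp [hjS, hjT])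
    calc v (S ∪ insert j T) = v (S ∪ T) + marg v (S ∪ T) j := by
          rw [Finset.union_insert, marg, add_sub_cancel]
      _ ≤ v S + ∑ l ∈ T, marg v S l + marg v S j := add_le_add ih hmarg
      _ = v S + ∑ l ∈ insert j T, marg v S l := by rw [Finset.sum_insert hjT]; ring

lemma apply_insert_le_add_apply_singleton (hv : ∀ S, 0 ≤ v S)
    (hvsub : ∀ S T : Finset ι, v (S ∪ T) + v (S ∩ T) ≤ v S + v T)
    (i : ι) (S : Finset ι) : v (insert i S) ≤ v S + v {i} := by
  have hsub := hvsub {i} S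
  rw [← Finset.insert_eq] at hsub
  linarith [hv ({i} ∩ S)]

lemma apply_le_add_mul_of_marg_le (hvmono : Monotone v)
    (hvsub : ∀ S T : Finset ι, v (S ∪ T) + v (S ∩ T) ≤ v S + v T)
    {c : ι → ℝ} {B ρ : ℝ} (hρ : 0 ≤ ρ) (hmarg : ∀ j ∈ T, marg v S j ≤ c j * ρ)
    (hT : ∑ j ∈ T, c j ≤ B) : v T ≤ v S + B * ρ :=
  calc v T ≤ v (S ∪ T) := hvmono Finset.subset_union_right
    _ ≤ v S + ∑ j ∈ T, marg v S j := apply_union_le_add_sum_marg hvsub S T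
    _ ≤ v S + ∑ j ∈ T, c j * ρ := by gcongr with j hj; exact hmarg j hj
    _ = v S + (∑ j ∈ T, c j) * ρ := by rw [Finset.sum_mul]
    _ ≤ v S + B * ρ := by gcongr

end Valuation

lemma optVal_le {ι : Type*} {v : Finset ι → ℝ} {b : ι → ℝ} {B x : ℝ} {A' : Finset ι}
    (hB : 0 ≤ B) (hx : ∀ T ⊆ A', ∑ i ∈ T, b i ≤ B → v T ≤ x) : optVal v b B A' ≤ x := by
  refine csSup_le ⟨v ∅, ∅, by simpa using hB, rfl⟩ ?_
  rintro _ ⟨T, ⟨hTA, hTB⟩, rfl⟩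
  exact hx T hTA hTB

section Greedy

variable {ι : Type*} [Fintype ι] [LinearOrder ι] [Nonempty ι]
  {v : Finset ι → ℝ} {b c : ι → ℝ} {S : Finset ι}

lemma marg_div_le_marg_pick_div {j : ι} (hj : j ∉ S) :
    marg v S j / b j ≤ marg v S (pick v b S) / b (pick v b S) := by
  have hjc : j ∈ Sᶜ := Finset.mem_compl.mpr hj
  have hpick : pick v b S ∈
      Sᶜ.filter fun l => ∀ l' ∈ Sᶜ, marg v S l' / b l' ≤ marg v S l / b l := by
    rw [pick, dif_pos ⟨j, hjc⟩]
    exact Finset.min'_mem _ _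
  exact (Finset.mem_filter.mp hpick).2 j hjc

lemma marg_le_mul_marg_pick_div (hvmono : Monotone v) (hc : ∀ i, 0 < c i) (j : ι) :
    marg v S j ≤ c j * (marg v S (pick v c S) / c (pick v c S)) := by
  by_cases hj : j ∈ S
  · rw [marg_eq_zero_of_mem hj]
    exact mul_nonneg (hc j).le (div_nonneg (marg_nonneg hvmono S _) (hc _).le)
  · exact (div_le_iff₀' (hc j)).mp (marg_div_le_marg_pick_div hj)

lemma optVal_le_add_mul_marg_pick_div (hvmono : Monotone v)
    (hvsub : ∀ S T : Finset ι, v (S ∪ T) + v (S ∩ T) ≤ v S + v T)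
    {B : ℝ} (hB : 0 ≤ B) (hc : ∀ i, 0 < c i) (S A' : Finset ι) :
    optVal v c B A' ≤ v S + B * (marg v S (pick v c S) / c (pick v c S)) :=
  optVal_le hB fun _ _ hT =>
    apply_le_add_mul_of_marg_le hvmono hvsub
      (div_nonneg (marg_nonneg hvmono S _) (hc _).le)
      (fun j _ => marg_le_mul_marg_pick_div hvmono hc j) hT

end Greedy

theorem greedyTM_approx_general {ι : Type*} [Fintype ι] [LinearOrder ι] [Nonempty ι]
    {v : Finset ι → ℝ} (hv0 : v ∅ = 0) (hvmono : Monotone v)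
    (hvsub : ∀ S T : Finset ι, v (S ∪ T) + v (S ∩ T) ≤ v S + v T)
    {B : ℝ} (hB : 0 ≤ B) {c : ι → ℝ} (hc : ∀ i, 0 < c i) {γ : ℝ} (hγ : 0 < γ)
    {k : ℕ} (hk : 1 ≤ k)
    (hthreshold : γ * B * marg v (greedySet v c (k - 1)) (agent v c k) ≤
      c (agent v c k) * v (greedySet v c k)) :
    optVal v c B Finset.univ ≤
      (1 + 1 / γ) * v (greedySet v c (k - 1)) + (1 / γ) * v {agent v c k} := by
  obtain ⟨t, rfl⟩ := Nat.exists_eq_add_of_le' hk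
  set S := greedySet v c t
  set a := agent v c (t + 1)
  change γ * B * marg v S a ≤ c a * v (insert a S) at hthreshold
  have hv : ∀ T, 0 ≤ v T := fun T => hv0.ge.trans (hvmono T.empty_subset)
  have hdensity : B * (marg v S a / c a) ≤ 1 / γ * v (insert a S) := by
    rw [← mul_div_assoc, div_le_iff₀ (hc a), one_div, mul_assoc, le_inv_mul_iff₀ hγ]
    linarith
  calc optVal v c B Finset.univ ≤ v S + B * (marg v S a / c a) :=
        optVal_le_add_mul_marg_pick_div hvmono hvsub hB hc S Finset.univ
    _ ≤ v S + 1 / γ * v (insert a S) := by gcongr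
    _ ≤ v S + 1 / γ * (v S + v {a}) := by
        gcongr
        exact apply_insert_le_add_apply_singleton hv hvsub a S
    _ = (1 + 1 / γ) * v S + 1 / γ * v {a} := by ring

/-- the key approximation inequality for `Greedy-TM(γ)` (Lemma 3.2). -/
theorem greedyTM_approx {ι : Type*} [Fintype ι] [LinearOrder ι] [Nonempty ι]
    (v : Finset ι → ℝ) (hv0 : v (∅ : Finset ι) = 0)
    (hvmono : ∀ S T : Finset ι, S ⊆ T → v S ≤ v T)
    (hvsub : ∀ S T : Finset ι, v (S ∪ T) + v (S ∩ T) ≤ v S + v T)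
    (B : ℝ) (hB : 0 < B)
    (c : ι → ℝ) (hc : ∀ i, 0 < c i) (hcB : ∀ i, c i ≤ B)
    (γ : ℝ) (hγ0 : 0 < γ) (hγ1 : γ ≤ 1)
    (istar : ι) (histar : ∀ j : ι, v {j} ≤ v {istar})
    (k : ℕ) (hk1 : 1 ≤ k) (hk2 : k ≤ Fintype.card ι)
    (hkcond : c (agent v c k) * v (greedySet v c k) >
      γ * B * marg v (greedySet v c (k - 1)) (agent v c k)) :
    (1 + 1 / γ) * v (greedySet v c (k - 1)) + (1 / γ) * v {istar} ≥
      optVal v c B Finset.univ := by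
  refine (greedyTM_approx_general hv0 hvmono hvsub hB.le hc hγ0 hk1 hkcond.le).trans ?_
  gcongr
  exact histar _
end

section
/- Let v be a monotone submodular valuation on subsets of A with v(∅) = 0, and let b assign a positive cost b_t to each agent t. Let S'' ⊆ S' ⊆ A, let T ⊆ A, and let i ∈ A with m_i(S'') > 0. Suppose that for every t ∈ T ∖ S' one has b_t · m_i(S'') ≥ b_i · m_t(S''). Then Σ_{t ∈ T ∖ S'} b_t ≥ (b_i / m_i(S'')) · (v(T) − v(S')). (This is the charging inequality used in all the budget feasibility proofs of the paper: Theorem 3.4 and Lemmas 4.3, 4.7 and 5.3.) -/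
open Classical

/-!
Add the elements of `T \ S'` to `S'` one at a time: by diminishing returns, each step increases `v`
by at most the marginal value of the new element over the smaller set `S''`. The charging hypothesis
bounds this marginal value, at the exchange rate `b i / marg v S'' i`, by the cost of the element.
-/

/-- Submodularity of a real set function, in the union/intersection form; it makes the
marginal values `marg v S t` decrease as `S` grows among the sets not containing `t`. -/
def IsSubmodular {ι : Type*} [DecidableEq ι] (v : Finset ι → ℝ) : Prop :=
  ∀ S T : Finset ι, v (S ∪ T) + v (S ∩ T) ≤ v S + v T

namespace IsSubmodular

variable {ι : Type*} [DecidableEq ι] {v : Finset ι → ℝ} {R S U : Finset ι}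

theorem marg_le_marg_of_subset (hv : IsSubmodular v) (hRS : R ⊆ S) {t : ι} (ht : t ∉ S) :
    marg v S t ≤ marg v R t := by
  have h_union : S ∪ insert t R = insert t S := by
    rw [Finset.union_insert, Finset.union_eq_left.mpr hRS]
  have h_inter : S ∩ insert t R = R := by
    rw [Finset.inter_insert_of_notMem ht, Finset.inter_eq_right.mpr hRS]
  have h_sub := hv S (insert t R)
  rw [h_union, h_inter] at h_sub
  unfold marg
  linarith

theorem union_sub_le_sum_marg (hv : IsSubmodular v) (hRS : R ⊆ S) (hSU : Disjoint S U) :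
    v (S ∪ U) - v S ≤ ∑ t ∈ U, marg v R t := by
  induction U using Finset.induction_on with
  | empty => simp
  | insert t U htU ih =>
    obtain ⟨htS, hSU⟩ := Finset.disjoint_insert_right.mp hSU
    have htSU : t ∉ S ∪ U := Finset.notMem_union.mpr ⟨htS, htU⟩
    calc v (S ∪ insert t U) - v S
        = marg v (S ∪ U) t + (v (S ∪ U) - v S) := by
          rw [Finset.union_insert, marg, sub_add_sub_cancel]
      _ ≤ marg v R t + ∑ t ∈ U, marg v R t :=
          add_le_add (hv.marg_le_marg_of_subset (hRS.trans Finset.subset_union_left) htSU) (ih hSU)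
      _ = ∑ t ∈ insert t U, marg v R t := (Finset.sum_insert htU).symm

end IsSubmodular

theorem charging_inequality_general {ι : Type*} [DecidableEq ι] {v : Finset ι → ℝ}
    (hv : IsSubmodular v) (b : ι → ℝ) {S'' S' T : Finset ι} (hS : S'' ⊆ S') {i : ι}
    (hbi : 0 ≤ b i) (hmi : 0 < marg v S'' i)
    (hcharge : ∀ t ∈ T \ S', b i * marg v S'' t ≤ b t * marg v S'' i) :
    (b i / marg v S'' i) * (v (S' ∪ T) - v S') ≤ ∑ t ∈ T \ S', b t := by
  have h_gain : v (S' ∪ T) - v S' ≤ ∑ t ∈ T \ S', marg v S'' t := by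
    simpa only [Finset.union_sdiff_self_eq_union] using
      hv.union_sub_le_sum_marg hS (Finset.disjoint_sdiff (s := S') (t := T))
  calc (b i / marg v S'' i) * (v (S' ∪ T) - v S')
      ≤ (b i / marg v S'' i) * ∑ t ∈ T \ S', marg v S'' t :=
        mul_le_mul_of_nonneg_left h_gain (div_nonneg hbi hmi.le)
    _ = ∑ t ∈ T \ S', b i * marg v S'' t / marg v S'' i := by
        simp only [Finset.mul_sum, div_mul_eq_mul_div]
    _ ≤ ∑ t ∈ T \ S', b t :=
        Finset.sum_le_sum fun t ht => (div_le_iff₀ hmi).mpr (hcharge t ht)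

/-- the charging inequality used in all budget feasibility proofs. -/
theorem charging_inequality {ι : Type*} [Fintype ι] [DecidableEq ι]
    (v : Finset ι → ℝ) (hv0 : v (∅ : Finset ι) = 0)
    (hvmono : ∀ S T : Finset ι, S ⊆ T → v S ≤ v T)
    (hvsub : ∀ S T : Finset ι, v (S ∪ T) + v (S ∩ T) ≤ v S + v T)
    (b : ι → ℝ) (hb : ∀ t, 0 < b t)
    (S'' S' T : Finset ι) (hS : S'' ⊆ S') (i : ι)
    (hmi : 0 < marg v S'' i)
    (hcharge : ∀ t ∈ T \ S', b i * marg v S'' t ≤ b t * marg v S'' i) :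
    (b i / marg v S'' i) * (v T - v S') ≤ ∑ t ∈ T \ S', b t := by
  have h_le : v T ≤ v (S' ∪ T) := hvmono _ _ Finset.subset_union_right
  exact (mul_le_mul_of_nonneg_left (sub_le_sub_right h_le _) (div_nonneg (hb i).le hmi.le)).trans
    (charging_inequality_general hvsub b hS (hb i).le hmi hcharge)
end

section
/- Let r ≥ 1 and α ∈ (0,1], and suppose the oracle O satisfies O(c, A') ≤ opt(A', B) ≤ r · O(c, A') for every A' ⊆ A. Let S = Greedy-OM(α, c) with respect to the true costs c. Then (1 + 2r/α) · [ (r/(α+2r)) · v(S) + ((α+r)/(α+2r)) · v({i*}) ] ≥ opt(A, B). (The bracketed quantity is the expected value obtained by Random-OM(α), which outputs Greedy-OM(α, c) with probability r/(α+2r) and outputs {i*} with probability (α+r)/(α+2r); hence Random-OM(α) is a (1 + 2r/α)-approximation, and in particular Random-OM(1/2) is a (1 + 4r)-approximation, of the optimum.) -/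
open Classical

/-!
Run through the agents in any order and let `k` be the first rejected one, so that the set `P` of
agents before `k` consists of winners. Rejection means `α · O(A ∖ {k}) < v(P ∪ {k})`, and
`v(P ∪ {k}) ≤ v(W) + v({k})` since `m_k(P) ≤ v({k})`. Moreover, removing `k` from an optimal
set costs at most `v({k})`, so `opt(A) ≤ r · O(A ∖ {k}) + v({k})`. Combining the two bounds with
`v({k}) ≤ v({i*})` gives `α · opt(A) ≤ r · v(W) + (α + r) · v({i*})`. If nobody is rejected then
`W = A` and the bound is immediate.
-/

section Valuation

variable {ι : Type*} [DecidableEq ι] {v : Finset ι → ℝ}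

lemma marg_le_singleton_of_submodular (hv_empty : 0 ≤ v ∅) (hv_mono : Monotone v)
    (hv_sub : ∀ S T, v (S ∪ T) + v (S ∩ T) ≤ v S + v T) (S : Finset ι) (i : ι) :
    marg v S i ≤ v {i} := by
  have inter_nonneg : 0 ≤ v (S ∩ {i}) := hv_empty.trans (hv_mono (Finset.empty_subset _))
  have union_add_inter_le := hv_sub S {i}
  rw [Finset.union_singleton] at union_add_inter_le
  rw [marg]
  linarith

lemma insert_le_add_singleton (hv_marg : ∀ S i, marg v S i ≤ v {i}) (S : Finset ι) (i : ι) :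
    v (insert i S) ≤ v S + v {i} :=
  sub_le_iff_le_add'.mp (hv_marg S i)

lemma nonneg_of_marg_le_singleton [Nonempty ι] (hv_mono : Monotone v)
    (hv_marg : ∀ S i, marg v S i ≤ v {i}) (S : Finset ι) : 0 ≤ v S := by
  obtain ⟨i⟩ := ‹Nonempty ι›
  have empty_nonneg : 0 ≤ v ∅ := by
    simpa only [insert_empty_eq, le_add_iff_nonneg_left] using insert_le_add_singleton hv_marg ∅ i
  exact empty_nonneg.trans (hv_mono S.empty_subset)

end Valuation

section Optimum

variable {ι : Type*} {v : Finset ι → ℝ} {c : ι → ℝ} {B : ℝ} {A' : Finset ι}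

lemma le_optVal {S : Finset ι} (hS : S ⊆ A') (hSB : ∑ i ∈ S, c i ≤ B) : v S ≤ optVal v c B A' := by
  have feasible_finite : {S : Finset ι | S ⊆ A' ∧ ∑ i ∈ S, c i ≤ B}.Finite :=
    A'.powerset.finite_toSet.subset fun _ hT => Finset.mem_powerset.mpr hT.1
  exact le_csSup (feasible_finite.image v).bddAbove ⟨S, ⟨hS, hSB⟩, rfl⟩

lemma optVal_le_s13 {x : ℝ} (hB : 0 ≤ B) (h : ∀ S ⊆ A', ∑ i ∈ S, c i ≤ B → v S ≤ x) :
    optVal v c B A' ≤ x := by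
  refine csSup_le ⟨v ∅, ∅, ⟨A'.empty_subset, by simpa using hB⟩, rfl⟩ ?_
  rintro _ ⟨S, ⟨hS, hSB⟩, rfl⟩
  exact h S hS hSB

lemma optVal_le_of_monotone (hv_mono : Monotone v) (hB : 0 ≤ B) : optVal v c B A' ≤ v A' :=
  optVal_le_s13 hB fun _ hS _ => hv_mono hS

lemma optVal_le_optVal_erase_add [DecidableEq ι] (hv_mono : Monotone v)
    (hv_marg : ∀ S i, marg v S i ≤ v {i}) (hB : 0 ≤ B) (hc : ∀ i, 0 ≤ c i) (i : ι) :
    optVal v c B A' ≤ optVal v c B (A'.erase i) + v {i} := by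
  refine optVal_le_s13 hB fun S hS hSB => ?_
  have erase_cost_le : ∑ j ∈ S.erase i, c j ≤ B :=
    (Finset.sum_le_sum_of_subset_of_nonneg (S.erase_subset i) fun j _ _ => hc j).trans hSB
  calc v S ≤ v (insert i (S.erase i)) := hv_mono (Finset.insert_erase_subset i S)
    _ ≤ v (S.erase i) + v {i} := insert_le_add_singleton hv_marg _ i
    _ ≤ optVal v c B (A'.erase i) + v {i} := by
      gcongr
      exact le_optVal (Finset.erase_subset_erase i hS) erase_cost_le

end Optimum

section ArbitraryOrder

variable {ι : Type*} [DecidableEq ι]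

lemma image_range_subset_or_exists_first_notMem (a : ℕ → ι) (W : Finset ι) (n : ℕ) :
    (Finset.range n).image a ⊆ W ∨
      ∃ k < n, (Finset.range k).image a ⊆ W ∧ a k ∉ W := by
  induction n with
  | zero => simp
  | succ n ih =>
    rcases ih with initial_subset | ⟨k, hk, first_notMem⟩
    · by_cases mem : a n ∈ W
      · left
        rw [Finset.range_add_one, Finset.image_insert]
        exact Finset.insert_subset mem initial_subset
      · exact .inr ⟨n, n.lt_succ_self, initial_subset, mem⟩
    · exact .inr ⟨k, hk.trans n.lt_succ_self, first_notMem⟩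

variable {v : Finset ι → ℝ} {c : ι → ℝ} {B r α : ℝ} {istar : ι}

lemma mul_optVal_le_of_rejected (hv_mono : Monotone v) (hv_marg : ∀ S i, marg v S i ≤ v {i})
    (hB : 0 ≤ B) (hc : ∀ i, 0 ≤ c i) (hr : 0 ≤ r) (hα : 0 ≤ α)
    (histar : ∀ j, v {j} ≤ v {istar}) {A' P W : Finset ι} {k : ι} {x : ℝ}
    (hx : optVal v c B (A'.erase k) ≤ r * x) (hPW : P ⊆ W) (hrej : α * x ≤ v (insert k P)) :
    α * optVal v c B A' ≤ r * v W + (α + r) * v {istar} := by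
  have threshold_le : α * x ≤ v W + v {istar} :=
    calc α * x ≤ v P + v {k} := hrej.trans (insert_le_add_singleton hv_marg P k)
      _ ≤ v W + v {istar} := add_le_add (hv_mono hPW) (histar k)
  have opt_le : optVal v c B A' ≤ r * x + v {istar} :=
    calc optVal v c B A' ≤ optVal v c B (A'.erase k) + v {k} :=
          optVal_le_optVal_erase_add hv_mono hv_marg hB hc k
      _ ≤ r * x + v {istar} := add_le_add hx (histar k)
  calc α * optVal v c B A' ≤ α * (r * x + v {istar}) := by gcongr
    _ = r * (α * x) + α * v {istar} := by ring
    _ ≤ r * (v W + v {istar}) + α * v {istar} := by gcongr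
    _ = r * v W + (α + r) * v {istar} := by ring

lemma mul_optVal_le_of_subset (hv_mono : Monotone v) (hv_marg : ∀ S i, marg v S i ≤ v {i})
    (hB : 0 ≤ B) (hα : 0 ≤ α) (hαr : α ≤ r) {A' W : Finset ι} (hAW : A' ⊆ W) (i : ι) :
    α * optVal v c B A' ≤ r * v W + (α + r) * v {i} := by
  have : Nonempty ι := ⟨i⟩
  have v_nonneg := nonneg_of_marg_le_singleton hv_mono hv_marg
  have singleton_term_nonneg : 0 ≤ (α + r) * v {i} :=
    mul_nonneg (add_nonneg hα (hα.trans hαr)) (v_nonneg {i})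
  calc α * optVal v c B A' ≤ α * v W := by
        gcongr
        exact (optVal_le_of_monotone hv_mono hB).trans (hv_mono hAW)
    _ ≤ r * v W := mul_le_mul_of_nonneg_right hαr (v_nonneg W)
    _ ≤ r * v W + (α + r) * v {i} := le_add_of_nonneg_right singleton_term_nonneg

theorem randomOM_approx_general [Fintype ι] (hv_mono : Monotone v)
    (hv_marg : ∀ S i, marg v S i ≤ v {i}) (hB : 0 ≤ B) (hc : ∀ i, 0 ≤ c i)
    (hα : 0 < α) (hαr : α ≤ r) {O : Finset ι → ℝ}
    (hO : ∀ i, optVal v c B (Finset.univ.erase i) ≤ r * O (Finset.univ.erase i))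
    {a : ℕ → ι} {n : ℕ} (ha : (Finset.range n).image a = Finset.univ) {W : Finset ι}
    (hW : ∀ t < n, v ((Finset.range (t + 1)).image a) ≤ α * O (Finset.univ.erase (a t)) → a t ∈ W)
    (histar : ∀ j, v {j} ≤ v {istar}) :
    optVal v c B Finset.univ ≤
      (1 + 2 * r / α) * (r / (α + 2 * r) * v W + (α + r) / (α + 2 * r) * v {istar}) := by
  have hr : 0 < r := hα.trans_le hαr
  have expected_value_eq :
      (1 + 2 * r / α) * (r / (α + 2 * r) * v W + (α + r) / (α + 2 * r) * v {istar}) =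
        (r * v W + (α + r) * v {istar}) / α := by
    field_simp
  rw [expected_value_eq, le_div_iff₀' hα]
  rcases image_range_subset_or_exists_first_notMem a W n with
    all_subset | ⟨k, hk, initial_subset, rejected⟩
  · exact mul_optVal_le_of_subset hv_mono hv_marg hB hα.le hαr (ha ▸ all_subset) istar
  · have exceeds := lt_of_not_ge (mt (hW k hk) rejected)
    rw [Finset.range_add_one, Finset.image_insert] at exceeds
    exact mul_optVal_le_of_rejected hv_mono hv_marg hB hc hr.le hα.le histar (hO (a k))
      initial_subset exceeds.le

end ArbitraryOrder

section GreedyOrder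

variable {ι : Type*} [Fintype ι] [LinearOrder ι] [Nonempty ι] (v : Finset ι → ℝ) (b : ι → ℝ)

lemma pick_notMem {S : Finset ι} (hS : Sᶜ.Nonempty) : pick v b S ∉ S := by
  rw [pick, dif_pos hS, ← Finset.mem_compl]
  exact Finset.filter_subset _ _ (Finset.min'_mem _ _)

lemma card_greedySet {t : ℕ} (ht : t ≤ Fintype.card ι) : (greedySet v b t).card = t := by
  induction t with
  | zero => rfl
  | succ t ih =>
    have card_eq : (greedySet v b t).card = t := ih (Nat.le_of_succ_le ht)
    have compl_nonempty : (greedySet v b t)ᶜ.Nonempty := by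
      rw [← Finset.card_pos, Finset.card_compl, card_eq]
      exact Nat.sub_pos_of_lt ht
    rw [greedySet, Finset.card_insert_of_notMem (pick_notMem v b compl_nonempty), card_eq]

lemma image_agent_range (t : ℕ) :
    (Finset.range t).image (fun s => agent v b (s + 1)) = greedySet v b t := by
  induction t with
  | zero => rfl
  | succ t ih => rw [Finset.range_add_one, Finset.image_insert, ih, greedySet, agent,
      Nat.add_sub_cancel]

lemma image_agent_range_card :
    (Finset.range (Fintype.card ι)).image (fun s => agent v b (s + 1)) = Finset.univ := by
  rw [image_agent_range, ← Finset.card_eq_iff_eq_univ, card_greedySet v b le_rfl]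

variable {v b} in
lemma agent_succ_mem_greedyOM {O : (ι → ℝ) → Finset ι → ℝ} {α : ℝ} {t : ℕ}
    (ht : t < Fintype.card ι)
    (h : v ((Finset.range (t + 1)).image fun s => agent v b (s + 1)) ≤
      α * O b (Finset.univ.erase (agent v b (t + 1)))) :
    agent v b (t + 1) ∈ greedyOM v O α b := by
  rw [image_agent_range] at h
  exact Finset.mem_image_of_mem _
    (Finset.mem_filter.mpr ⟨Finset.mem_Icc.mpr ⟨t.succ_pos, ht⟩, h⟩)

end GreedyOrder

/-- `Random-OM(α)` with an `r`-approximation oracle is a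
`(1 + 2r/α)`-approximation of the optimum (Theorem 4.9). -/
theorem randomOM_approx {ι : Type*} [Fintype ι] [LinearOrder ι] [Nonempty ι]
    (v : Finset ι → ℝ) (hv0 : v (∅ : Finset ι) = 0)
    (hvmono : ∀ S T : Finset ι, S ⊆ T → v S ≤ v T)
    (hvsub : ∀ S T : Finset ι, v (S ∪ T) + v (S ∩ T) ≤ v S + v T)
    (B : ℝ) (hB : 0 < B)
    (c : ι → ℝ) (hc : ∀ i, 0 < c i) (hcB : ∀ i, c i ≤ B)
    (r : ℝ) (hr : 1 ≤ r) (α : ℝ) (hα0 : 0 < α) (hα1 : α ≤ 1)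
    (O : (ι → ℝ) → Finset ι → ℝ)
    (hO : ∀ A' : Finset ι, O c A' ≤ optVal v c B A' ∧ optVal v c B A' ≤ r * O c A')
    (istar : ι) (histar : ∀ j : ι, v {j} ≤ v {istar}) :
    (1 + 2 * r / α) * (r / (α + 2 * r) * v (greedyOM v O α c) +
        (α + r) / (α + 2 * r) * v {istar}) ≥
      optVal v c B Finset.univ := by
  have hv_mono : Monotone v := fun S T => hvmono S T
  exact randomOM_approx_general hv_mono (marg_le_singleton_of_submodular hv0.ge hv_mono hvsub)
    hB.le (fun i => (hc i).le) hα0 (hα1.trans hr) (fun i => (hO (Finset.univ.erase i)).2)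
    (image_agent_range_card v c) (fun _ => agent_succ_mem_greedyOM) histar
end
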